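/- arXiv:2412.16416 — 5 statements merged into one kernel-verified Lean document; each statement's English description precedes it below -/
import Mathlib

section
/- Let d ≥ 1, let τ : (0,1)^d → ℝ^d have components τ_1,…,τ_d each possessing continuous mixed first-order partial derivatives ∂^v τ_i for all subsets v ⊆ {1,…,d}, and let f : ℝ^d → ℝ have continuous partial derivatives ∂^λ f for all multi-indices λ ∈ ℕ_0^d with |λ| ≤ d. Assume (i) for every B > 0 there exists C > 0 such that |∂^λ f(τ(u))| ≤ C ∏_{j=1}^d min(u_j, 1-u_j)^{-B} for all multi-indices λ with |λ| ≤ d and all u ∈ (0,1)^d; and (ii) for every B > 0 there exists C > 0 such that |∂^v τ_i(u)| ≤ C ∏_{j=1}^d min(u_j, 1-u_j)^{-B - 1[j∈v]} for all i ∈ {1,…,d}, all v ⊆ {1,…,d}, and all u ∈ (0,1)^d. Then the composition h = f ∘ τ satisfies the boundary growth condition: for every B > 0 there exists C > 0 such that |∂^v h(u)| ≤ C ∏_{j=1}^d min(u_j, 1-u_j)^{-B - 1[j∈v]} for all v ⊆ {1,…,d} and all u ∈ (0,1)^d. -/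
/-- Partial derivative of `g : ℝ^d → ℝ` in coordinate `i`. -/
noncomputable def partialD {d : ℕ} (i : Fin d) (g : (Fin d → ℝ) → ℝ) : (Fin d → ℝ) → ℝ :=
  fun x => deriv (fun t => g (Function.update x i t)) (x i)

/-- Mixed first-order partial derivative `∂^v g` with respect to the variables indexed by the
subset `v ⊆ {1,…,d}`, with `∂^∅ g = g`. -/
noncomputable def partialDSet {d : ℕ} (v : Finset (Fin d)) (g : (Fin d → ℝ) → ℝ) :
    (Fin d → ℝ) → ℝ :=
  v.toList.foldr partialD g

/-- Partial derivative `∂^λ f` for a multi-index `λ ∈ ℕ_0^d`: differentiate `λ_j` times with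
respect to the `j`-th variable. -/
noncomputable def partialDMulti {d : ℕ} (lam : Fin d → ℕ) (f : (Fin d → ℝ) → ℝ) :
    (Fin d → ℝ) → ℝ :=
  (List.finRange d).foldr (fun i g => (partialD i)^[lam i] g) f

/-!
Say that `φ` has growth `w` if it is `O(∏ⱼ ρⱼ ^ (-B - 1[j ∈ w]))` for every `B > 0`, and growth `w`
to order `k` if moreover each of up to `k` successive derivatives, in distinct variables outside
`w`, adds its variable to `w`. Splitting `B` in halves, this is stable under products of functions
with disjoint sets `w`. In `∂ⱼ (g ∘ τ) = ∑ᵢ (∂ᵢ g ∘ τ) * ∂ⱼ τᵢ` the second factor has growth `{j}`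
to order `k` and, by induction on `k`, the first one has growth `∅` to order `k`; hence `g ∘ τ` has
growth `∅` to order `k + 1`.
-/

open Set

section

variable {d m : ℕ} {s : Set (Fin d → ℝ)} {g h : (Fin d → ℝ) → ℝ} {x : Fin d → ℝ}

theorem partialD_eq_fderiv (i : Fin d) (hg : DifferentiableAt ℝ g x) :
    partialD i g x = fderiv ℝ g x (Pi.single i 1) := by
  have hg' : HasFDerivAt g (fderiv ℝ g x) (Function.update x i (x i)) := by
    rw [Function.update_eq_self]
    exact hg.hasFDerivAt
  exact (hg'.comp_hasDerivAt (x i) (hasDerivAt_update x i (x i))).deriv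

theorem fderiv_apply_eq_sum_partialD (hg : DifferentiableAt ℝ g x) (a : Fin d → ℝ) :
    fderiv ℝ g x a = ∑ i, a i * partialD i g x := by
  conv_lhs => rw [← Finset.univ_sum_single a, map_sum]
  refine Finset.sum_congr rfl fun i _ => ?_
  rw [partialD_eq_fderiv i hg, ← smul_eq_mul, ← map_smul, ← Pi.single_smul, smul_eq_mul, mul_one]

theorem partialD_add (i : Fin d) (hg : DifferentiableAt ℝ g x) (hh : DifferentiableAt ℝ h x) :
    partialD i (g + h) x = partialD i g x + partialD i h x := by
  rw [partialD_eq_fderiv i (hg.add hh), fderiv_add hg hh, partialD_eq_fderiv i hg,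
    partialD_eq_fderiv i hh, add_apply]

theorem partialD_mul (i : Fin d) (hg : DifferentiableAt ℝ g x) (hh : DifferentiableAt ℝ h x) :
    partialD i (g * h) x = partialD i g x * h x + g x * partialD i h x := by
  rw [partialD_eq_fderiv i (hg.mul hh), fderiv_mul hg hh, partialD_eq_fderiv i hg,
    partialD_eq_fderiv i hh]
  simp only [add_apply, smul_apply, smul_eq_mul]
  ring

theorem partialD_comp (j : Fin d) {τ : (Fin d → ℝ) → Fin m → ℝ} {f : (Fin m → ℝ) → ℝ}
    (hf : DifferentiableAt ℝ f (τ x)) (hτ : ∀ i, DifferentiableAt ℝ (fun u => τ u i) x) :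
    partialD j (f ∘ τ) x = ∑ i, partialD i f (τ x) * partialD j (fun u => τ u i) x := by
  have hτ' : DifferentiableAt ℝ τ x := differentiableAt_pi.2 hτ
  rw [partialD_eq_fderiv j (hf.comp x hτ'), fderiv_comp x hf hτ',
    ContinuousLinearMap.comp_apply, fderiv_apply_eq_sum_partialD hf]
  refine Finset.sum_congr rfl fun i _ => ?_
  rw [partialD_eq_fderiv j (hτ i), mul_comm, fderiv_pi hτ, ContinuousLinearMap.pi_apply]

theorem eqOn_partialD (hs : IsOpen s) (i : Fin d) (hgh : EqOn g h s) :
    EqOn (partialD i g) (partialD i h) s := by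
  intro x hx
  have hline : ContinuousAt (Function.update x i) (x i) :=
    (hasDerivAt_update x i (x i)).continuousAt
  have hmem : s ∈ nhds (Function.update x i (x i)) := by
    rw [Function.update_eq_self]
    exact hs.mem_nhds hx
  exact Filter.EventuallyEq.deriv_eq <| (hline.eventually_mem hmem).mono fun _ ht => hgh ht

theorem contDiffOn_partialD {k n : WithTop ℕ∞} (hs : IsOpen s) (i : Fin d)
    (hg : ContDiffOn ℝ n g s) (hkn : k + 1 ≤ n) : ContDiffOn ℝ k (partialD i g) s := by
  have hg1 : ContDiffOn ℝ 1 g s := hg.of_le (le_add_self.trans hkn)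
  refine ((hg.fderiv_of_isOpen hs hkn).clm_apply contDiffOn_const).congr fun x hx =>
    partialD_eq_fderiv i ?_
  exact (hg1.differentiableOn one_ne_zero).differentiableAt (hs.mem_nhds hx)

theorem contDiffOn_foldr_partialD {n : ℕ} (hs : IsOpen s) (hg : ContDiffOn ℝ n g s)
    (l : List (Fin d)) {k : ℕ} (hl : l.length + k ≤ n) :
    ContDiffOn ℝ k (l.foldr partialD g) s := by
  induction l generalizing k with
  | nil => exact hg.of_le (by simpa using hl)
  | cons a l ih =>
    have hl' : l.length + (k + 1) ≤ n := by rw [List.length_cons] at hl; omega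
    exact contDiffOn_partialD hs a (ih hl') (by norm_cast)

theorem partialD_partialD_eq_fderiv (hs : IsOpen s) (hg : ContDiffOn ℝ 2 g s) (i j : Fin d)
    (hx : x ∈ s) : partialD i (partialD j g) x =
      fderiv ℝ (fderiv ℝ g) x (Pi.single i 1) (Pi.single j 1) := by
  have hg' : DifferentiableOn ℝ g s := hg.differentiableOn two_ne_zero
  have hfd : DifferentiableAt ℝ (fderiv ℝ g) x :=
    ((hg.fderiv_of_isOpen (m := 1) hs one_add_one_eq_two.le).differentiableOn
      one_ne_zero).differentiableAt (hs.mem_nhds hx)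
  have heq : EqOn (partialD j g) (fun y => fderiv ℝ g y (Pi.single j 1)) s := fun y hy =>
    partialD_eq_fderiv j (hg'.differentiableAt (hs.mem_nhds hy))
  rw [eqOn_partialD hs i heq hx, partialD_eq_fderiv i (hfd.clm_apply (differentiableAt_const _)),
    fderiv_clm_apply hfd (differentiableAt_const _)]
  simp

theorem eqOn_partialD_comm (hs : IsOpen s) (hg : ContDiffOn ℝ 2 g s) (i j : Fin d) :
    EqOn (partialD i (partialD j g)) (partialD j (partialD i g)) s := by
  intro x hx
  rw [partialD_partialD_eq_fderiv hs hg i j hx, partialD_partialD_eq_fderiv hs hg j i hx]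
  exact (hg.contDiffAt (hs.mem_nhds hx)).isSymmSndFDerivAt (by simp) _ _

theorem eqOn_foldr_partialD_of_perm {n : ℕ} (hs : IsOpen s) (hg : ContDiffOn ℝ n g s)
    {l₁ l₂ : List (Fin d)} (hp : l₁.Perm l₂) (hl : l₁.length ≤ n) :
    EqOn (l₁.foldr partialD g) (l₂.foldr partialD g) s := by
  induction hp with
  | nil => exact eqOn_refl _ _
  | cons a _ ih => exact eqOn_partialD hs a (ih (Nat.le_of_succ_le hl))
  | swap a b l => exact eqOn_partialD_comm hs (contDiffOn_foldr_partialD hs hg l hl) b a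
  | trans h₁ _ ih₁ ih₂ => exact (ih₁ hl).trans (ih₂ (h₁.length_eq ▸ hl))

theorem eqOn_partialDSet_insert {n : ℕ} (hs : IsOpen s) (hg : ContDiffOn ℝ n g s)
    {w : Finset (Fin d)} {j : Fin d} (hj : j ∉ w) (hn : w.card + 1 ≤ n) :
    EqOn (partialDSet (insert j w) g) (partialD j (partialDSet w g)) s :=
  eqOn_foldr_partialD_of_perm hs hg (Finset.toList_insert hj)
    (by rwa [Finset.length_toList, Finset.card_insert_of_notMem hj])

theorem partialDMulti_eq_foldr (lam : Fin d → ℕ) (g : (Fin d → ℝ) → ℝ) :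
    partialDMulti lam g =
      ((List.finRange d).flatMap fun i => List.replicate (lam i) i).foldr partialD g := by
  have hiterate (i : Fin d) (k : ℕ) (g : (Fin d → ℝ) → ℝ) :
      (List.replicate k i).foldr partialD g = (partialD i)^[k] g := by
    induction k with
    | zero => rfl
    | succ k ih => rw [List.replicate_succ, List.foldr_cons, ih, Function.iterate_succ_apply']
  rw [List.foldr_flatMap]
  simp only [hiterate]
  rfl

theorem perm_flatMap_replicate_count (l : List (Fin d)) :
    l.Perm ((List.finRange d).flatMap fun i => List.replicate (l.count i) i) := by
  refine List.perm_iff_count.2 fun a => ?_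
  rw [List.count_flatMap, ← List.ofFn_eq_map, List.sum_ofFn]
  simp [List.count_replicate]

theorem eqOn_foldr_partialD_partialDMulti_count {n : ℕ} (hs : IsOpen s)
    (hg : ContDiffOn ℝ n g s) {l : List (Fin d)} (hl : l.length ≤ n) :
    EqOn (l.foldr partialD g) (partialDMulti (fun i => l.count i) g) s := by
  rw [partialDMulti_eq_foldr]
  exact eqOn_foldr_partialD_of_perm hs hg (perm_flatMap_replicate_count l) hl

theorem sum_count_eq_length {α : Type*} [Fintype α] [DecidableEq α] (l : List α) :
    ∑ a, l.count a = l.length := by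
  simpa using Multiset.sum_count_eq_card (s := Finset.univ) (m := (l : Multiset α)) fun a _ =>
    Finset.mem_univ a

end

section

variable {α ι : Type*} [Fintype ι] [DecidableEq ι] {U : Set α} {ρ : α → ι → ℝ}
  {w w' : Finset ι} {φ ψ : α → ℝ}

/-- The boundary growth condition on `U` for a single function: for every `B > 0`, `φ` is bounded
by a multiple of `∏ⱼ ρⱼ ^ (-B - 1[j ∈ w])`. The weight `ρ u j` stands for the distance from the
`j`-th coordinate of `u` to the boundary, which is `min (u j) (1 - u j)` on the unit cube. -/
def BoundaryGrowth (U : Set α) (ρ : α → ι → ℝ) (w : Finset ι) (φ : α → ℝ) : Prop :=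
  ∀ B : ℝ, 0 < B → ∃ C : ℝ, 0 < C ∧ ∀ u ∈ U,
    |φ u| ≤ C * ∏ j, ρ u j ^ (-(B + if j ∈ w then (1 : ℝ) else 0))

namespace BoundaryGrowth

theorem congr (hφ : BoundaryGrowth U ρ w φ) (heq : EqOn ψ φ U) : BoundaryGrowth U ρ w ψ := by
  intro B hB
  obtain ⟨C, hC, hbound⟩ := hφ B hB
  exact ⟨C, hC, fun u hu => (heq hu).symm ▸ hbound u hu⟩

theorem zero (hρ : ∀ u ∈ U, ∀ j, 0 < ρ u j) : BoundaryGrowth U ρ w 0 := by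
  refine fun B _ => ⟨1, one_pos, fun u hu => ?_⟩
  rw [Pi.zero_apply, abs_zero, one_mul]
  exact Finset.prod_nonneg fun j _ => Real.rpow_nonneg (hρ u hu j).le _

theorem add (hφ : BoundaryGrowth U ρ w φ) (hψ : BoundaryGrowth U ρ w ψ) :
    BoundaryGrowth U ρ w (φ + ψ) := by
  intro B hB
  obtain ⟨C, hC, hφC⟩ := hφ B hB
  obtain ⟨D, hD, hψD⟩ := hψ B hB
  refine ⟨C + D, add_pos hC hD, fun u hu => ?_⟩
  rw [add_mul]
  exact (abs_add_le _ _).trans (add_le_add (hφC u hu) (hψD u hu))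

theorem mul (hρ : ∀ u ∈ U, ∀ j, 0 < ρ u j) (hφ : BoundaryGrowth U ρ w φ)
    (hψ : BoundaryGrowth U ρ w' ψ) (hw : Disjoint w w') :
    BoundaryGrowth U ρ (w ∪ w') (φ * ψ) := by
  intro B hB
  obtain ⟨C, hC, hφC⟩ := hφ (B / 2) (half_pos hB)
  obtain ⟨D, hD, hψD⟩ := hψ (B / 2) (half_pos hB)
  refine ⟨C * D, mul_pos hC hD, fun u hu => ?_⟩
  have hexp (j : ι) : -(B + if j ∈ w ∪ w' then (1 : ℝ) else 0) =
      -(B / 2 + if j ∈ w then 1 else 0) + -(B / 2 + if j ∈ w' then 1 else 0) := by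
    have hj : j ∈ w → j ∉ w' := fun h => Finset.disjoint_left.1 hw h
    grind
  simp only [hexp, Real.rpow_add (hρ u hu _), Finset.prod_mul_distrib]
  rw [Pi.mul_apply, abs_mul, mul_mul_mul_comm]
  exact mul_le_mul (hφC u hu) (hψD u hu) (abs_nonneg _) ((abs_nonneg _).trans (hφC u hu))

theorem exists_uniform_bound {κ : Type*} [Finite κ] {w : κ → Finset ι} {φ : κ → α → ℝ}
    (hρ : ∀ u ∈ U, ∀ j, 0 < ρ u j) (hφ : ∀ a, BoundaryGrowth U ρ (w a) (φ a))
    {B : ℝ} (hB : 0 < B) : ∃ C : ℝ, 0 < C ∧ ∀ a, ∀ u ∈ U,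
      |φ a u| ≤ C * ∏ j, ρ u j ^ (-(B + if j ∈ w a then (1 : ℝ) else 0)) := by
  choose C _ hbound using fun a => hφ a B hB
  obtain ⟨M, hM⟩ := Finite.exists_le C
  refine ⟨max M 1, lt_max_of_lt_right one_pos, fun a u hu => (hbound a u hu).trans ?_⟩
  have hprod : 0 ≤ ∏ j, ρ u j ^ (-(B + if j ∈ w a then (1 : ℝ) else 0)) :=
    Finset.prod_nonneg fun j _ => Real.rpow_nonneg (hρ u hu j).le _
  exact mul_le_mul_of_nonneg_right (le_max_of_le_left (hM a)) hprod

end BoundaryGrowth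

end

section

variable {d m : ℕ} {U : Set (Fin d → ℝ)} {ρ : (Fin d → ℝ) → Fin d → ℝ} {k : ℕ}
  {w w' : Finset (Fin d)} {φ ψ : (Fin d → ℝ) → ℝ}

/-- `φ` and its mixed first-order derivatives `∂^v φ` with `v` disjoint from `w` and `|v| ≤ k` have
boundary growth `w ∪ v`. The recursion on the order peels off the innermost derivative, and
differentiability is required for the sum and product rules, as `partialD` takes the junk value `0`
where `φ` has no partial derivative. -/
def BoundaryGrowthToOrder (U : Set (Fin d → ℝ)) (ρ : (Fin d → ℝ) → Fin d → ℝ) :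
    ℕ → Finset (Fin d) → ((Fin d → ℝ) → ℝ) → Prop
  | 0, w, φ => BoundaryGrowth U ρ w φ
  | k + 1, w, φ => BoundaryGrowth U ρ w φ ∧ DifferentiableOn ℝ φ U ∧
      ∀ j ∉ w, BoundaryGrowthToOrder U ρ k (insert j w) (partialD j φ)

namespace BoundaryGrowthToOrder

theorem boundaryGrowth (hφ : BoundaryGrowthToOrder U ρ k w φ) : BoundaryGrowth U ρ w φ := by
  cases k with
  | zero => exact hφ
  | succ k => exact hφ.1

theorem of_succ (hφ : BoundaryGrowthToOrder U ρ (k + 1) w φ) :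
    BoundaryGrowthToOrder U ρ k w φ := by
  induction k generalizing w φ with
  | zero => exact hφ.1
  | succ k ih => exact ⟨hφ.1, hφ.2.1, fun j hj => ih (hφ.2.2 j hj)⟩

theorem congr (hU : IsOpen U) (hφ : BoundaryGrowthToOrder U ρ k w φ) (heq : EqOn ψ φ U) :
    BoundaryGrowthToOrder U ρ k w ψ := by
  induction k generalizing w φ ψ with
  | zero => exact BoundaryGrowth.congr hφ heq
  | succ k ih =>
    exact ⟨hφ.1.congr heq, hφ.2.1.congr heq,
      fun j hj => ih (hφ.2.2 j hj) (eqOn_partialD hU j heq)⟩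

theorem zero (hρ : ∀ u ∈ U, ∀ j, 0 < ρ u j) : BoundaryGrowthToOrder U ρ k w 0 := by
  induction k generalizing w with
  | zero => exact BoundaryGrowth.zero hρ
  | succ k ih =>
    have hzero (j : Fin d) : partialD j 0 = 0 := by
      funext x
      simp [partialD]
    exact ⟨BoundaryGrowth.zero hρ, differentiableOn_const 0, fun j _ => (hzero j).symm ▸ ih⟩

theorem add (hU : IsOpen U) (hφ : BoundaryGrowthToOrder U ρ k w φ)
    (hψ : BoundaryGrowthToOrder U ρ k w ψ) : BoundaryGrowthToOrder U ρ k w (φ + ψ) := by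
  induction k generalizing w φ ψ with
  | zero => exact BoundaryGrowth.add hφ hψ
  | succ k ih =>
    obtain ⟨hφ₀, hφd, hφ'⟩ := hφ
    obtain ⟨hψ₀, hψd, hψ'⟩ := hψ
    refine ⟨hφ₀.add hψ₀, hφd.add hψd, fun j hj => (ih (hφ' j hj) (hψ' j hj)).congr hU ?_⟩
    exact fun x hx => partialD_add j (hφd.differentiableAt (hU.mem_nhds hx))
      (hψd.differentiableAt (hU.mem_nhds hx))

theorem sum (hU : IsOpen U) (hρ : ∀ u ∈ U, ∀ j, 0 < ρ u j) {κ : Type*} (s : Finset κ)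
    {φ : κ → (Fin d → ℝ) → ℝ} (hφ : ∀ i ∈ s, BoundaryGrowthToOrder U ρ k w (φ i)) :
    BoundaryGrowthToOrder U ρ k w (∑ i ∈ s, φ i) :=
  Finset.sum_induction φ _ (fun _ _ => add hU) (zero hρ) hφ

theorem mul (hU : IsOpen U) (hρ : ∀ u ∈ U, ∀ j, 0 < ρ u j)
    (hφ : BoundaryGrowthToOrder U ρ k w φ) (hψ : BoundaryGrowthToOrder U ρ k w' ψ)
    (hw : Disjoint w w') : BoundaryGrowthToOrder U ρ k (w ∪ w') (φ * ψ) := by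
  induction k generalizing w w' φ ψ with
  | zero => exact BoundaryGrowth.mul hρ hφ hψ hw
  | succ k ih =>
    refine ⟨hφ.1.mul hρ hψ.1 hw, hφ.2.1.mul hψ.2.1, fun j hj => ?_⟩
    obtain ⟨hjw, hjw'⟩ := Finset.notMem_union.1 hj
    have hleft : BoundaryGrowthToOrder U ρ k (insert j (w ∪ w')) (partialD j φ * ψ) :=
      Finset.insert_union j w w' ▸
        ih (hφ.2.2 j hjw) hψ.of_succ (Finset.disjoint_insert_left.2 ⟨hjw', hw⟩)
    have hright : BoundaryGrowthToOrder U ρ k (insert j (w ∪ w')) (φ * partialD j ψ) :=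
      Finset.union_insert j w w' ▸
        ih hφ.of_succ (hψ.2.2 j hjw') (Finset.disjoint_insert_right.2 ⟨hjw, hw⟩)
    exact (hleft.add hU hright).congr hU fun x hx =>
      partialD_mul j (hφ.2.1.differentiableAt (hU.mem_nhds hx))
        (hψ.2.1.differentiableAt (hU.mem_nhds hx))

theorem comp (hU : IsOpen U) (hρ : ∀ u ∈ U, ∀ j, 0 < ρ u j) {V : Set (Fin m → ℝ)}
    (hV : IsOpen V) {τ : (Fin d → ℝ) → Fin m → ℝ} {f : (Fin m → ℝ) → ℝ} (hτV : MapsTo τ U V)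
    (hτ : ∀ i, BoundaryGrowthToOrder U ρ k ∅ fun u => τ u i) (hfV : ContDiffOn ℝ k f V)
    (hf : ∀ l : List (Fin m), l.length ≤ k → BoundaryGrowth U ρ ∅ (l.foldr partialD f ∘ τ)) :
    BoundaryGrowthToOrder U ρ k ∅ (f ∘ τ) := by
  induction k generalizing f with
  | zero => exact hf [] le_rfl
  | succ k ih =>
    have hfd : DifferentiableOn ℝ f V := hfV.differentiableOn (by simp)
    have hτd : DifferentiableOn ℝ τ U := differentiableOn_pi.2 fun i => (hτ i).2.1
    refine ⟨hf [] (Nat.zero_le _), hfd.comp hτd hτV, fun j hj => ?_⟩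
    have houter (i : Fin m) : BoundaryGrowthToOrder U ρ k ∅ (partialD i f ∘ τ) := by
      refine ih (fun i => (hτ i).of_succ) (contDiffOn_partialD hV i hfV (by norm_cast))
        fun l hl => ?_
      simpa using hf (l ++ [i]) (by simpa using hl)
    have hsum : BoundaryGrowthToOrder U ρ k (insert j ∅)
        (∑ i, (partialD i f ∘ τ) * partialD j fun u => τ u i) := by
      refine sum hU hρ _ fun i _ => ?_
      simpa using (houter i).mul hU hρ ((hτ i).2.2 j hj) (Finset.disjoint_empty_left _)
    refine hsum.congr hU fun x hx => ?_
    simpa using partialD_comp j (hfd.differentiableAt (hV.mem_nhds (hτV hx)))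
      fun i => (hτ i).2.1.differentiableAt (hU.mem_nhds hx)

theorem foldr_partialD {l : List (Fin d)} (hl : l.Nodup)
    (hφ : BoundaryGrowthToOrder U ρ (l.length + k) ∅ φ) :
    BoundaryGrowthToOrder U ρ k l.toFinset (l.foldr partialD φ) := by
  induction l generalizing k with
  | nil => simpa using hφ
  | cons j l ih =>
    obtain ⟨hj, hl⟩ := List.nodup_cons.1 hl
    have htail : BoundaryGrowthToOrder U ρ (k + 1) l.toFinset (l.foldr partialD φ) :=
      ih hl (by rwa [List.length_cons, add_right_comm] at hφ)
    simpa using htail.2.2 j (by simpa using hj)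

theorem boundaryGrowth_partialDSet (hφ : BoundaryGrowthToOrder U ρ k ∅ φ)
    {v : Finset (Fin d)} (hv : v.card ≤ k) : BoundaryGrowth U ρ v (partialDSet v φ) := by
  obtain ⟨n, rfl⟩ := Nat.exists_eq_add_of_le hv
  rw [← v.length_toList] at hφ
  have hfoldr := (foldr_partialD v.nodup_toList hφ).boundaryGrowth
  rwa [Finset.toList_toFinset] at hfoldr

theorem partialDSet_of_contDiffOn (hU : IsOpen U) {n : ℕ} (hφ : ContDiffOn ℝ n φ U)
    (hgrowth : ∀ v, BoundaryGrowth U ρ v (partialDSet v φ)) (hn : w.card + k ≤ n) :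
    BoundaryGrowthToOrder U ρ k w (partialDSet w φ) := by
  induction k generalizing w with
  | zero => exact hgrowth w
  | succ k ih =>
    have hdiff : ContDiffOn ℝ (k + 1 : ℕ) (partialDSet w φ) U :=
      contDiffOn_foldr_partialD hU hφ w.toList (by rwa [Finset.length_toList])
    refine ⟨hgrowth w, hdiff.differentiableOn (by simp), fun j hj => ?_⟩
    have hinsert : (insert j w).card + k ≤ n := by
      rw [Finset.card_insert_of_notMem hj]
      omega
    exact (ih hinsert).congr hU (eqOn_partialDSet_insert hU hφ hj (by omega)).symm

end BoundaryGrowthToOrder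

end

theorem stmt_0_general {d m : ℕ} {U : Set (Fin d → ℝ)} (hU : IsOpen U)
    {ρ : (Fin d → ℝ) → Fin d → ℝ} (hρ : ∀ u ∈ U, ∀ j, 0 < ρ u j)
    {V : Set (Fin m → ℝ)} (hV : IsOpen V)
    {τ : (Fin d → ℝ) → Fin m → ℝ} {f : (Fin m → ℝ) → ℝ} (hτV : MapsTo τ U V)
    (hτsmooth : ∀ i, ContDiffOn ℝ d (fun u => τ u i) U) (hfsmooth : ContDiffOn ℝ d f V)
    (hf : ∀ B : ℝ, 0 < B → ∃ C : ℝ, 0 < C ∧ ∀ lam : Fin m → ℕ, (∑ j, lam j) ≤ d → ∀ u ∈ U,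
      |partialDMulti lam f (τ u)| ≤ C * ∏ j, ρ u j ^ (-B))
    (hτ : ∀ B : ℝ, 0 < B → ∃ C : ℝ, 0 < C ∧ ∀ (i : Fin m) (v : Finset (Fin d)), ∀ u ∈ U,
      |partialDSet v (fun w => τ w i) u| ≤
        C * ∏ j, ρ u j ^ (-(B + if j ∈ v then (1 : ℝ) else 0)))
    (B : ℝ) (hB : 0 < B) : ∃ C : ℝ, 0 < C ∧ ∀ v : Finset (Fin d), ∀ u ∈ U,
      |partialDSet v (f ∘ τ) u| ≤
        C * ∏ j, ρ u j ^ (-(B + if j ∈ v then (1 : ℝ) else 0)) := by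
  have hτgrowth (i : Fin m) (v : Finset (Fin d)) :
      BoundaryGrowth U ρ v (partialDSet v fun u => τ u i) := fun B hB =>
    (hτ B hB).imp fun _ hC => ⟨hC.1, hC.2 i v⟩
  have hfgrowth (l : List (Fin m)) (hl : l.length ≤ d) :
      BoundaryGrowth U ρ ∅ (l.foldr partialD f ∘ τ) := by
    intro B hB
    obtain ⟨C, hC, hbound⟩ := hf B hB
    refine ⟨C, hC, fun u hu => ?_⟩
    rw [Function.comp_apply, eqOn_foldr_partialD_partialDMulti_count hV hfsmooth hl (hτV hu)]
    simpa using hbound (fun i => l.count i) ((sum_count_eq_length l).trans_le hl) u hu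
  have hτorder (i : Fin m) : BoundaryGrowthToOrder U ρ d ∅ fun u => τ u i := by
    simpa [partialDSet] using BoundaryGrowthToOrder.partialDSet_of_contDiffOn (w := ∅) hU
      (hτsmooth i) (hτgrowth i) (by simp)
  have hcomp : BoundaryGrowthToOrder U ρ d ∅ (f ∘ τ) :=
    .comp hU hρ hV hτV hτorder hfsmooth hfgrowth
  exact BoundaryGrowth.exists_uniform_bound hρ
    (fun v => hcomp.boundaryGrowth_partialDSet (by simpa using v.card_le_univ)) hB

theorem isOpen_unitCube (d : ℕ) : IsOpen {u : Fin d → ℝ | ∀ j, u j ∈ Ioo (0 : ℝ) 1} := by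
  simpa [pi] using isOpen_set_pi (finite_univ (α := Fin d)) fun _ _ => isOpen_Ioo (a := (0 : ℝ))

/-- If (i) every partial derivative `∂^λ f` with `|λ| ≤ d`, evaluated at `τ(u)`, is bounded by
`C ∏_j min(u_j, 1-u_j)^{-B}` for arbitrarily small `B > 0`, and (ii) every mixed partial
`∂^v τ_i` is bounded by `C ∏_j min(u_j, 1-u_j)^{-B-1[j∈v]}` for arbitrarily small `B > 0`,
then `h = f ∘ τ` satisfies the boundary growth condition:
`|∂^v h(u)| ≤ C ∏_j min(u_j, 1-u_j)^{-B-1[j∈v]}` for arbitrarily small `B > 0`. -/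
theorem stmt_0 (d : ℕ) (hd : 1 ≤ d)
    (τ : (Fin d → ℝ) → (Fin d → ℝ)) (f : (Fin d → ℝ) → ℝ)
    (hτsmooth : ∀ i : Fin d, ContDiffOn ℝ d (fun u => τ u i)
      {u : Fin d → ℝ | ∀ j, u j ∈ Set.Ioo (0:ℝ) 1})
    (hfsmooth : ContDiff ℝ d f)
    (hf : ∀ B : ℝ, 0 < B → ∃ C : ℝ, 0 < C ∧ ∀ lam : Fin d → ℕ, (∑ j, lam j) ≤ d →
      ∀ u : Fin d → ℝ, (∀ j, u j ∈ Set.Ioo (0:ℝ) 1) →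
      |partialDMulti lam f (τ u)| ≤ C * ∏ j, (min (u j) (1 - u j)) ^ (-B))
    (hτ : ∀ B : ℝ, 0 < B → ∃ C : ℝ, 0 < C ∧ ∀ (i : Fin d) (v : Finset (Fin d)),
      ∀ u : Fin d → ℝ, (∀ j, u j ∈ Set.Ioo (0:ℝ) 1) →
      |partialDSet v (fun w => τ w i) u| ≤
        C * ∏ j, (min (u j) (1 - u j)) ^ (-(B + if j ∈ v then (1:ℝ) else 0))) :
    ∀ B : ℝ, 0 < B → ∃ C : ℝ, 0 < C ∧ ∀ v : Finset (Fin d),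
      ∀ u : Fin d → ℝ, (∀ j, u j ∈ Set.Ioo (0:ℝ) 1) →
      |partialDSet v (f ∘ τ) u| ≤
        C * ∏ j, (min (u j) (1 - u j)) ^ (-(B + if j ∈ v then (1:ℝ) else 0)) :=
  stmt_0_general (isOpen_unitCube d) (fun _ hu j => lt_min (hu j).1 (sub_pos.2 (hu j).2))
    isOpen_univ (mapsTo_univ τ _) hτsmooth hfsmooth.contDiffOn hf hτ
end

section
/- Let Φ⁻¹ : (0,1) → ℝ denote the inverse of the standard Gaussian CDF. Then for every u ∈ (0,1), the derivative satisfies (Φ⁻¹)'(u) = 1/φ(Φ⁻¹(u)) ≤ √(π/2) · min(u, 1-u)^{-1}. -/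
open MeasureTheory

/-- The standard Gaussian density `φ(z) = (2π)^{-1/2} e^{-z²/2}`. -/
noncomputable def gaussPDF (z : ℝ) : ℝ := (Real.sqrt (2 * Real.pi))⁻¹ * Real.exp (-z ^ 2 / 2)

/-- The standard Gaussian CDF `Φ(z) = ∫_{-∞}^z φ(t) dt`. -/
noncomputable def gaussCDF (z : ℝ) : ℝ := ∫ t in Set.Iic z, gaussPDF t

/-!
Since `Φ` is a topological embedding with `Φ' = φ > 0`, any right inverse of `Φ` on `(0, 1)` is
continuous there, and differentiating `Φ (Φ⁻¹ u) = u` gives the formula for the derivative.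

For the bound put `z = Φ⁻¹ u`; by symmetry only the tail of `φ` beyond some `z ≥ 0` matters. For
`s ≥ 0` we have `(s + z)² ≥ s² + z²`, so shifting the tail to the origin yields
`1 - Φ z = ∫₀^∞ φ (s + z) ds ≤ e^{-z²/2} / 2 = √(π/2) φ z`.
-/

open Filter Real Set Topology

theorem hasDerivAt_of_isInducing_of_eventually_rightInverse {𝕜 : Type*} [NontriviallyNormedField 𝕜]
    {f g : 𝕜 → 𝕜} {f' u : 𝕜} (hf : IsInducing f) (hf' : HasDerivAt f f' (g u)) (hne : f' ≠ 0)
    (hfg : ∀ᶠ v in 𝓝 u, f (g v) = v) : HasDerivAt g f'⁻¹ u :=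
  have hg : ContinuousAt g u := hf.continuousAt_iff.2 (continuousAt_id.congr_of_eventuallyEq hfg)
  .of_local_left_inverse hg hf' hne hfg

section HalfLineIntegral

variable {E : Type*} [NormedAddCommGroup E] [NormedSpace ℝ E]

theorem hasDerivAt_integral_Iic [CompleteSpace E] {f : ℝ → E} {x : ℝ} (hf : Integrable f)
    (hx : ContinuousAt f x) : HasDerivAt (fun y ↦ ∫ t in Iic y, f t) (f x) x := by
  have h_split (y : ℝ) : ∫ t in Iic y, f t = (∫ t in Iic x, f t) + ∫ t in x..y, f t :=
    sub_eq_iff_eq_add'.1 <|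
      intervalIntegral.integral_Iic_sub_Iic hf.integrableOn hf.integrableOn
  rw [funext h_split]
  exact (intervalIntegral.integral_hasDerivAt_right hf.intervalIntegrable
    hf.aestronglyMeasurable.stronglyMeasurableAtFilter hx).const_add _

theorem integral_comp_add_right_Ioi (f : ℝ → E) (a c : ℝ) :
    ∫ t in Ioi a, f (t + c) = ∫ t in Ioi (a + c), f t := by
  simpa using (measurePreserving_add_right volume c).setIntegral_preimage_emb
    (measurableEmbedding_addRight c) f (Ioi (a + c))

theorem integral_Iic_neg_of_even {f : ℝ → E} (hf : f.Even) (z : ℝ) :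
    ∫ t in Iic (-z), f t = ∫ t in Ioi z, f t := by
  simpa only [hf _, neg_neg] using integral_comp_neg_Iic (-z) f

end HalfLineIntegral

theorem integral_Ioi_exp_neg_mul_sq_le {b z : ℝ} (hb : 0 < b) (hz : 0 ≤ z) :
    ∫ t in Ioi z, exp (-b * t ^ 2) ≤ exp (-b * z ^ 2) * (√(π / b) / 2) := by
  have h_int := integrable_exp_neg_mul_sq hb
  calc ∫ t in Ioi z, exp (-b * t ^ 2)
      = ∫ s in Ioi 0, exp (-b * (s + z) ^ 2) := by
        rw [integral_comp_add_right_Ioi (fun t ↦ exp (-b * t ^ 2)), zero_add]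
    _ ≤ ∫ s in Ioi 0, exp (-b * z ^ 2) * exp (-b * s ^ 2) := by
        refine setIntegral_mono_on (h_int.comp_add_right z).integrableOn
          (h_int.const_mul _).integrableOn measurableSet_Ioi fun s hs ↦ ?_
        have h_cross : 0 ≤ b * (s * z) := mul_nonneg hb.le (mul_nonneg (mem_Ioi.1 hs).le hz)
        rw [← exp_add, exp_le_exp]
        linarith
    _ = exp (-b * z ^ 2) * (√(π / b) / 2) := by
        rw [integral_const_mul, integral_gaussian_Ioi]

theorem gaussPDF_eq_gaussianPDFReal : gaussPDF = ProbabilityTheory.gaussianPDFReal 0 1 := by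
  ext z
  simp [gaussPDF, ProbabilityTheory.gaussianPDFReal]

theorem gaussPDF_pos (z : ℝ) : 0 < gaussPDF z := by
  unfold gaussPDF
  positivity

theorem continuous_gaussPDF : Continuous gaussPDF := by
  unfold gaussPDF
  fun_prop

theorem even_gaussPDF : gaussPDF.Even := fun z ↦ by simp [gaussPDF]

theorem integrable_gaussPDF : Integrable gaussPDF :=
  gaussPDF_eq_gaussianPDFReal ▸ ProbabilityTheory.integrable_gaussianPDFReal 0 1

theorem integral_gaussPDF : ∫ t, gaussPDF t = 1 :=
  gaussPDF_eq_gaussianPDFReal ▸ ProbabilityTheory.integral_gaussianPDFReal_eq_one 0 one_ne_zero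

theorem hasDerivAt_gaussCDF (z : ℝ) : HasDerivAt gaussCDF (gaussPDF z) z :=
  hasDerivAt_integral_Iic integrable_gaussPDF continuous_gaussPDF.continuousAt

theorem strictMono_gaussCDF : StrictMono gaussCDF :=
  strictMono_of_hasDerivAt_pos hasDerivAt_gaussCDF gaussPDF_pos

theorem isEmbedding_gaussCDF : IsEmbedding gaussCDF :=
  have h_cont : Continuous gaussCDF :=
    continuous_iff_continuousAt.2 fun z ↦ (hasDerivAt_gaussCDF z).continuousAt
  strictMono_gaussCDF.isEmbedding_of_ordConnected (isPreconnected_range h_cont).ordConnected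

theorem gaussCDF_neg_eq_integral_Ioi (z : ℝ) : gaussCDF (-z) = ∫ t in Ioi z, gaussPDF t :=
  integral_Iic_neg_of_even even_gaussPDF z

theorem gaussCDF_neg (z : ℝ) : gaussCDF (-z) = 1 - gaussCDF z := by
  rw [gaussCDF_neg_eq_integral_Ioi, eq_sub_iff_add_eq', ← integral_gaussPDF]
  exact intervalIntegral.integral_Iic_add_Ioi integrable_gaussPDF.integrableOn
    integrable_gaussPDF.integrableOn

theorem gaussCDF_neg_le {z : ℝ} (hz : 0 ≤ z) : gaussCDF (-z) ≤ √(π / 2) * gaussPDF z := by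
  have h_pdf (t : ℝ) : gaussPDF t = (√(2 * π))⁻¹ * exp (-(1 / 2) * t ^ 2) := by
    rw [gaussPDF]
    ring_nf
  have h_sqrt : √(π / (1 / 2)) / 2 = √(π / 2) := by
    rw [show π / (1 / 2) = 2 ^ 2 * (π / 2) by ring, sqrt_mul (by positivity),
      sqrt_sq zero_le_two, mul_div_cancel_left₀ _ two_ne_zero]
  calc gaussCDF (-z)
      = (√(2 * π))⁻¹ * ∫ t in Ioi z, exp (-(1 / 2) * t ^ 2) := by
        simp only [gaussCDF_neg_eq_integral_Ioi, h_pdf, integral_const_mul]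
    _ ≤ (√(2 * π))⁻¹ * (exp (-(1 / 2) * z ^ 2) * √(π / 2)) := by
        rw [← h_sqrt]
        gcongr
        exact integral_Ioi_exp_neg_mul_sq_le one_half_pos hz
    _ = √(π / 2) * gaussPDF z := by
        rw [h_pdf]
        ring

theorem min_gaussCDF_one_sub_gaussCDF_le (z : ℝ) :
    min (gaussCDF z) (1 - gaussCDF z) ≤ √(π / 2) * gaussPDF z := by
  rcases le_total 0 z with hz | hz
  · exact min_le_of_right_le (gaussCDF_neg z ▸ gaussCDF_neg_le hz)
  · have h := gaussCDF_neg_le (neg_nonneg.2 hz)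
    rw [neg_neg, even_gaussPDF z] at h
    exact min_le_of_left_le h

/-- If `Φinv` is the inverse of the standard Gaussian CDF on `(0,1)`, then for every
`u ∈ (0,1)`, `(Φ⁻¹)'(u) = 1/φ(Φ⁻¹(u)) ≤ √(π/2) · min(u, 1-u)⁻¹`. -/
theorem stmt_4 (Φinv : ℝ → ℝ)
    (hΦinv : ∀ u ∈ Set.Ioo (0:ℝ) 1, gaussCDF (Φinv u) = u) :
    ∀ u ∈ Set.Ioo (0:ℝ) 1,
      deriv Φinv u = (gaussPDF (Φinv u))⁻¹ ∧
      (gaussPDF (Φinv u))⁻¹ ≤ Real.sqrt (Real.pi / 2) * (min u (1 - u))⁻¹ := by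
  intro u hu
  have h_pos : 0 < gaussPDF (Φinv u) := gaussPDF_pos _
  constructor
  · have h_inv : ∀ᶠ v in 𝓝 u, gaussCDF (Φinv v) = v :=
      eventually_of_mem (Ioo_mem_nhds hu.1 hu.2) hΦinv
    exact (hasDerivAt_of_isInducing_of_eventually_rightInverse isEmbedding_gaussCDF.isInducing
      (hasDerivAt_gaussCDF _) h_pos.ne' h_inv).deriv
  · have h_min : 0 < min u (1 - u) := lt_min hu.1 (sub_pos.2 hu.2)
    have h_bound : min u (1 - u) ≤ √(π / 2) * gaussPDF (Φinv u) := by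
      simpa only [hΦinv u hu] using min_gaussCDF_one_sub_gaussCDF_le (Φinv u)
    rwa [← div_eq_mul_inv, le_div_iff₀ h_min, inv_mul_le_iff₀' h_pos]
end

section
/- Let F : ℝ → (0,1) be monotonically increasing with x ↦ log F(x) concave on ℝ. Let d ≥ 1, let c_1,…,c_d ∈ ℝ satisfy Σ_{k=1}^d |c_k| = 1, and let x_1,…,x_d ∈ ℝ. Then F(-|Σ_{k=1}^d c_k x_k|) ≥ ∏_{k=1}^d F(-|x_k|)^{|c_k|}. -/
theorem prod_rpow_le_map_sum_of_concaveOn_log {ι E : Type*} [AddCommGroup E] [Module ℝ E]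
    {s : Set E} {f : E → ℝ} (hf : ConcaveOn ℝ s fun x ↦ Real.log (f x)) (hpos : ∀ x ∈ s, 0 < f x)
    {t : Finset ι} {w : ι → ℝ} {p : ι → E} (hw : ∀ i ∈ t, 0 ≤ w i) (hw_sum : ∑ i ∈ t, w i = 1)
    (hp : ∀ i ∈ t, p i ∈ s) :
    ∏ i ∈ t, f (p i) ^ w i ≤ f (∑ i ∈ t, w i • p i) := by
  have hmem : ∑ i ∈ t, w i • p i ∈ s := hf.1.sum_mem hw hw_sum hp
  calc ∏ i ∈ t, f (p i) ^ w i
      = ∏ i ∈ t, Real.exp (w i * Real.log (f (p i))) := Finset.prod_congr rfl fun i hi ↦ by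
        rw [Real.rpow_def_of_pos (hpos _ (hp i hi)), mul_comm]
    _ = Real.exp (∑ i ∈ t, w i • Real.log (f (p i))) := (Real.exp_sum t _).symm
    _ ≤ Real.exp (Real.log (f (∑ i ∈ t, w i • p i))) :=
        Real.exp_le_exp.mpr (hf.le_map_sum hw hw_sum hp)
    _ = f (∑ i ∈ t, w i • p i) := Real.exp_log (hpos _ hmem)

section NormedModule

variable {ι 𝕜 E : Type*} [SeminormedRing 𝕜] [SeminormedAddCommGroup E] [Module 𝕜 E]
  [IsBoundedSMul 𝕜 E]

theorem norm_sum_smul_le_sum_norm_mul_norm (t : Finset ι) (c : ι → 𝕜) (x : ι → E) :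
    ‖∑ k ∈ t, c k • x k‖ ≤ ∑ k ∈ t, ‖c k‖ * ‖x k‖ :=
  norm_sum_le_of_le t fun k _ ↦ norm_smul_le (c k) (x k)

theorem stmt_11_general {F : ℝ → ℝ} (hFpos : ∀ r ∈ Set.Iic (0 : ℝ), 0 < F r)
    (hFmono : MonotoneOn F (Set.Iic 0))
    (hFconc : ConcaveOn ℝ (Set.Iic 0) fun r ↦ Real.log (F r))
    {t : Finset ι} (c : ι → 𝕜) (x : ι → E) (hc : ∑ k ∈ t, ‖c k‖ = 1) :
    ∏ k ∈ t, F (-‖x k‖) ^ ‖c k‖ ≤ F (-‖∑ k ∈ t, c k • x k‖) := by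
  have hneg (y : E) : -‖y‖ ∈ Set.Iic (0 : ℝ) := neg_nonpos.mpr (norm_nonneg y)
  have htriangle : ∑ k ∈ t, ‖c k‖ • -‖x k‖ ≤ -‖∑ k ∈ t, c k • x k‖ := by
    simpa only [smul_eq_mul, mul_neg, Finset.sum_neg_distrib, neg_le_neg_iff]
      using norm_sum_smul_le_sum_norm_mul_norm t c x
  calc ∏ k ∈ t, F (-‖x k‖) ^ ‖c k‖
      ≤ F (∑ k ∈ t, ‖c k‖ • -‖x k‖) :=
        prod_rpow_le_map_sum_of_concaveOn_log hFconc hFpos (fun k _ ↦ norm_nonneg (c k)) hc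
          fun k _ ↦ hneg (x k)
    _ ≤ F (-‖∑ k ∈ t, c k • x k‖) := hFmono (htriangle.trans (hneg _)) (hneg _) htriangle

end NormedModule

/-- Let `F : ℝ → (0,1)` be monotonically increasing with `log F` concave. If
`Σ_k |c_k| = 1` then `F(-|Σ_k c_k x_k|) ≥ ∏_k F(-|x_k|)^{|c_k|}`. -/
theorem stmt_11 (F : ℝ → ℝ)
    (hFrange : ∀ x : ℝ, F x ∈ Set.Ioo (0:ℝ) 1)
    (hFmono : Monotone F)
    (hFconc : ConcaveOn ℝ Set.univ fun x : ℝ => Real.log (F x))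
    (d : ℕ) (hd : 1 ≤ d) (c x : Fin d → ℝ) (hc : ∑ k, |c k| = 1) :
    F (-|∑ k, c k * x k|) ≥ ∏ k, (F (-|x k|)) ^ |c k| :=
  stmt_11_general (fun r _ ↦ (hFrange r).1) (hFmono.monotoneOn _)
    (hFconc.subset (Set.subset_univ _) (convex_Iic 0)) c x hc
end

section
/- Let F : ℝ → (0,1) be a strictly increasing, differentiable, surjective function (a CDF on ℝ) with x ↦ log F(x) concave and F(x) + F(-x) = 1 for all x. Let d ≥ 1 and K ≥ 0. For k = 1,…,K let L^k be a d×d lower-triangular real matrix with positive diagonal entries whose rows satisfy Σ_{j=1}^d |L^k_{ij}| = 1 for every i, and let T^k_1,…,T^k_d : ℝ → ℝ be strictly increasing bijections such that there exist B₁ > 0 and C₁ > 0 with min(F(z), 1-F(z))^{-1} ≤ C₁ · min(F((T^k_j)^{-1}(z)), 1 - F((T^k_j)^{-1}(z)))^{-B₁} for all z ∈ ℝ, all k, and all j. Define τ^{1:K} : (0,1)^d → ℝ^d by τ^{1:K}(u) = τ^K(⋯τ^1(F^{-1}(u))⋯) where F^{-1} is applied componentwise and τ^k(x) = (T^k_1((L^k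 x)_1), …, T^k_d((L^k x)_d)). Then there exist constants B > 0 and C > 0 such that for all j ∈ {1,…,d} and all u ∈ (0,1)^d, writing z = τ^{1:K}(u): min(F(z_j), 1-F(z_j))^{-1} ≤ C · ∏_{l=1}^d min(u_l, 1-u_l)^{-B}. -/
/-- Composition of autoregressive layers `τ^K ∘ ⋯ ∘ τ^1`, where layer `k` maps
`x ↦ (T^k_j ((L^k x)_j))_j`. -/
noncomputable def applyLayers {d K : ℕ} (L : Fin K → Matrix (Fin d) (Fin d) ℝ)
    (T : Fin K → Fin d → ℝ → ℝ) (x : Fin d → ℝ) : Fin d → ℝ :=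
  (List.finRange K).foldl (fun y k => fun j => T k j ((L k).mulVec y j)) x

/-!
Measure the size of a real number by `w z = (min (F z) (1 - F z))⁻¹ = (F (-|z|))⁻¹`, which is
nondecreasing in `|z|`. A matrix with rows of `ℓ¹`-norm at most one does not increase
`max_j |x_j|`, hence does not increase `max_j w (x_j)`, while the elementwise maps raise it to a
power. Maps that enlarge `max_j w (x_j)` at most polynomially are closed under composition, and
`max_j w (x_j) ≤ ∏_j w (x_j)` because `w ≥ 1`.
-/

section PowerGrowth

variable {ι α β : Type*} {w : α → ℝ}

/-- The map `f` enlarges the coordinatewise size, as measured by `w`, at most polynomially. The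
quantity `max_i w (x i)` is encoded through its upper bounds `R`, so that `ι` may be infinite or
empty. -/
def HasPowerGrowth (w : α → ℝ) (f : (ι → α) → ι → α) : Prop :=
  ∃ B : ℝ, 0 < B ∧ ∃ C : ℝ, 0 < C ∧ ∀ x : ι → α, ∀ R : ℝ, 0 ≤ R →
    (∀ i, w (x i) ≤ R) → ∀ i, w (f x i) ≤ C * R ^ B

theorem HasPowerGrowth.of_forall_exists_le {f : (ι → α) → ι → α}
    (hf : ∀ x i, ∃ j, w (f x i) ≤ w (x j)) : HasPowerGrowth w f := by
  refine ⟨1, one_pos, 1, one_pos, fun x R _ hx i => ?_⟩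
  obtain ⟨j, hj⟩ := hf x i
  simpa only [Real.rpow_one, one_mul] using hj.trans (hx j)

theorem HasPowerGrowth.comp {f g : (ι → α) → ι → α} (hg : HasPowerGrowth w g)
    (hf : HasPowerGrowth w f) : HasPowerGrowth w fun x => g (f x) := by
  obtain ⟨B, hB, C, hC, hf⟩ := hf
  obtain ⟨B', hB', C', hC', hg⟩ := hg
  refine ⟨B * B', by positivity, C' * C ^ B', by positivity, fun x R hR hx i => ?_⟩
  calc w (g (f x) i) ≤ C' * (C * R ^ B) ^ B' := hg _ _ (by positivity) (hf x R hR hx) i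
    _ = C' * C ^ B' * R ^ (B * B') := by
      rw [Real.mul_rpow hC.le (by positivity), ← Real.rpow_mul hR, mul_assoc]

theorem HasPowerGrowth.foldl {f : (ι → α) → β → ι → α}
    (hf : ∀ b, HasPowerGrowth w fun x => f x b) (l : List β) :
    HasPowerGrowth w fun x => l.foldl f x := by
  induction l with
  | nil => exact .of_forall_exists_le fun _ i => ⟨i, le_rfl⟩
  | cons b l ih => exact ih.comp (hf b)

theorem HasPowerGrowth.piMap {t : ι → α → α} {B C : ℝ} (hw : ∀ a, 0 ≤ w a) (hB : 0 < B)
    (hC : 0 < C) (ht : ∀ i a, w (t i a) ≤ C * w a ^ B) : HasPowerGrowth w (Pi.map t) := by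
  refine ⟨B, hB, C, hC, fun x R _ hx i => (ht i (x i)).trans ?_⟩
  gcongr
  exacts [hw _, hx i]

theorem HasPowerGrowth.exists_le_prod_rpow [Fintype ι] {f : (ι → α) → ι → α}
    (hf : HasPowerGrowth w f) (hw : ∀ a, 1 ≤ w a) :
    ∃ B : ℝ, 0 < B ∧ ∃ C : ℝ, 0 < C ∧ ∀ x i, w (f x i) ≤ C * ∏ j, w (x j) ^ B := by
  have hw₀ a : 0 ≤ w a := zero_le_one.trans (hw a)
  obtain ⟨B, hB, C, hC, hf⟩ := hf
  refine ⟨B, hB, C, hC, fun x i => ?_⟩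
  have le_prod k : w (x k) ≤ ∏ j, w (x j) := by
    simpa only [Finset.prod_singleton] using Finset.prod_le_prod_of_subset_of_one_le
      (Finset.subset_univ {k}) (fun j _ => hw₀ (x j)) fun j _ _ => hw (x j)
  rw [Real.finsetProd_rpow _ _ fun j _ => hw₀ (x j)]
  exact hf x _ (Finset.prod_nonneg fun j _ => hw₀ (x j)) le_prod i

end PowerGrowth

theorem exists_norm_mulVec_apply_le {m n R : Type*} [Fintype n] [Nonempty n]
    [NonUnitalSeminormedRing R] {A : Matrix m n R} {i : m} (hA : ∑ j, ‖A i j‖ ≤ 1) (x : n → R) :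
    ∃ j, ‖A.mulVec x i‖ ≤ ‖x j‖ := by
  obtain ⟨j, hj⟩ := Finite.exists_max fun j => ‖x j‖
  refine ⟨j, ?_⟩
  calc ‖A.mulVec x i‖ ≤ ∑ l, ‖A i l * x l‖ := norm_sum_le _ _
    _ ≤ ∑ l, ‖A i l‖ * ‖x j‖ := by
      gcongr with l
      exact (norm_mul_le _ _).trans (by gcongr; exact hj l)
    _ = (∑ l, ‖A i l‖) * ‖x j‖ := (Finset.sum_mul ..).symm
    _ ≤ ‖x j‖ := mul_le_of_le_one_left (norm_nonneg _) hA

theorem hasPowerGrowth_mulVec {ι R : Type*} [Fintype ι] [NonUnitalSeminormedRing R] {w : R → ℝ}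
    (hw : ∀ a b, ‖a‖ ≤ ‖b‖ → w a ≤ w b) {A : Matrix ι ι R} (hA : ∀ i, ∑ j, ‖A i j‖ ≤ 1) :
    HasPowerGrowth w A.mulVec := by
  refine .of_forall_exists_le fun x i => ?_
  have : Nonempty ι := ⟨i⟩
  obtain ⟨j, hj⟩ := exists_norm_mulVec_apply_le (hA i) x
  exact ⟨j, hw _ _ hj⟩

section InvTail

variable {F : ℝ → ℝ}

/-- The reciprocal of the smaller of the two tail masses that a distribution function `F` leaves
at `z`; it is the size function whose growth through the layers is controlled. -/
noncomputable def invTail (F : ℝ → ℝ) (z : ℝ) : ℝ :=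
  (min (F z) (1 - F z))⁻¹

theorem invTail_eq_inv_apply_neg_abs (hmono : Monotone F) (hsym : ∀ x, F x + F (-x) = 1) (z : ℝ) :
    invTail F z = (F (-|z|))⁻¹ := by
  rw [invTail, ← hsym z, add_sub_cancel_left, ← hmono.map_min, abs,
    ← min_neg_neg, neg_neg, min_comm]

theorem invTail_le_of_abs_le (hpos : ∀ x, 0 < F x) (hmono : Monotone F)
    (hsym : ∀ x, F x + F (-x) = 1) {y z : ℝ} (h : |y| ≤ |z|) : invTail F y ≤ invTail F z := by
  simp only [invTail_eq_inv_apply_neg_abs hmono hsym]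
  exact inv_anti₀ (hpos _) (hmono (neg_le_neg h))

theorem one_le_invTail (hpos : ∀ x, 0 < F x) (hsym : ∀ x, F x + F (-x) = 1) (z : ℝ) :
    1 ≤ invTail F z := by
  have hz := hpos z
  have hz' := hpos (-z)
  have hsum := hsym z
  exact (one_le_inv₀ (lt_min hz (by linarith))).2 ((min_le_left _ _).trans (by linarith))

end InvTail

theorem stmt_12_general {d K : ℕ} {F : ℝ → ℝ} (hFpos : ∀ x, 0 < F x) (hFmono : Monotone F)
    (hFsym : ∀ x, F x + F (-x) = 1) {L : Fin K → Matrix (Fin d) (Fin d) ℝ}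
    (hLrow : ∀ k i, ∑ j, |L k i j| ≤ 1) {T : Fin K → Fin d → ℝ → ℝ} {B₁ C₁ : ℝ}
    (hB₁ : 0 < B₁) (hC₁ : 0 < C₁)
    (hTgrowth : ∀ k j x, (min (F (T k j x)) (1 - F (T k j x)))⁻¹ ≤
      C₁ * (min (F x) (1 - F x)) ^ (-B₁)) :
    ∃ B : ℝ, 0 < B ∧ ∃ C : ℝ, 0 < C ∧ ∀ (x : Fin d → ℝ) (j : Fin d),
      (min (F (applyLayers L T x j)) (1 - F (applyLayers L T x j)))⁻¹ ≤
        C * ∏ l, (min (F (x l)) (1 - F (x l))) ^ (-B) := by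
  have hw := one_le_invTail hFpos hFsym
  simp only [Real.rpow_neg_eq_inv_rpow] at hTgrowth ⊢
  have hlayer k : HasPowerGrowth (invTail F) fun x j => T k j ((L k).mulVec x j) :=
    (HasPowerGrowth.piMap (fun z => zero_le_one.trans (hw z)) hB₁ hC₁ (hTgrowth k)).comp
      (hasPowerGrowth_mulVec (fun _ _ => invTail_le_of_abs_le hFpos hFmono hFsym) (hLrow k))
  exact (HasPowerGrowth.foldl hlayer (List.finRange K)).exists_le_prod_rpow hw

/-- Growth of the composite map `τ^{1:K} = τ^K ∘ ⋯ ∘ τ^1 ∘ F⁻¹`: there exist `B, C > 0` such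
that for all `j` and all `u ∈ (0,1)^d`, writing `z = τ^{1:K}(u)`,
`min(F(z_j), 1-F(z_j))⁻¹ ≤ C ∏_l min(u_l, 1-u_l)^{-B}`. -/
theorem stmt_12 (d K : ℕ) (hd : 1 ≤ d)
    (F Finv : ℝ → ℝ)
    (hFrange : ∀ x : ℝ, F x ∈ Set.Ioo (0:ℝ) 1)
    (hFmono : StrictMono F)
    (hFdiff : Differentiable ℝ F)
    (hFsurj : ∀ y ∈ Set.Ioo (0:ℝ) 1, ∃ x, F x = y)
    (hFconc : ConcaveOn ℝ Set.univ fun x : ℝ => Real.log (F x))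
    (hFsym : ∀ x : ℝ, F x + F (-x) = 1)
    (hFinv : ∀ u ∈ Set.Ioo (0:ℝ) 1, F (Finv u) = u)
    (L : Fin K → Matrix (Fin d) (Fin d) ℝ)
    (hLtri : ∀ k, ∀ i j : Fin d, i < j → L k i j = 0)
    (hLdiag : ∀ k i, 0 < L k i i)
    (hLrow : ∀ k i, ∑ j, |L k i j| = 1)
    (T Tinv : Fin K → Fin d → ℝ → ℝ)
    (hTmono : ∀ k j, StrictMono (T k j))
    (hTbij : ∀ k j, Function.Bijective (T k j))
    (hTinv : ∀ k j, Function.RightInverse (Tinv k j) (T k j))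
    (B₁ C₁ : ℝ) (hB₁ : 0 < B₁) (hC₁ : 0 < C₁)
    (hTgrowth : ∀ k j (z : ℝ), (min (F z) (1 - F z))⁻¹ ≤
      C₁ * (min (F (Tinv k j z)) (1 - F (Tinv k j z))) ^ (-B₁)) :
    ∃ B : ℝ, 0 < B ∧ ∃ C : ℝ, 0 < C ∧ ∀ j : Fin d, ∀ u : Fin d → ℝ,
      (∀ l, u l ∈ Set.Ioo (0:ℝ) 1) →
      (min (F (applyLayers L T (fun i => Finv (u i)) j))
          (1 - F (applyLayers L T (fun i => Finv (u i)) j)))⁻¹ ≤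
        C * ∏ l, (min (u l) (1 - u l)) ^ (-B) := by
  obtain ⟨B, hB, C, hC, h⟩ := stmt_12_general (fun x => (hFrange x).1) hFmono.monotone hFsym
    (fun k i => (hLrow k i).le) hB₁ hC₁ fun k j x => by
      simpa only [(hTinv k j).rightInverse_of_injective (hTbij k j).1 x] using
        hTgrowth k j (T k j x)
  refine ⟨B, hB, C, hC, fun j u hu => ?_⟩
  simpa only [fun l => hFinv (u l) (hu l)] using h (fun l => Finv (u l)) j
end

section
/- Let F : ℝ → (0,1) be a strictly increasing, differentiable, surjective function with x ↦ log F(x) concave and F(x) + F(-x) = 1. Let d ≥ 1, K ≥ 0, and for k = 1,…,K let L^k be a d×d lower-triangular matrix with positive diagonal whose rows satisfy Σ_j |L^k_{ij}| = 1, and let T^k_1,…,T^k_d : ℝ → ℝ be strictly increasing bijections such that there exist B₁, C₁ > 0 with min(F(z), 1-F(z))^{-1} ≤ C₁·min(F((T^k_j)^{-1}(z)), 1-F((T^k_j)^{-1}(z)))^{-B₁} for all z ∈ ℝ, all k, j. Define τ = τ^K ∘ ⋯ ∘ τ^1 ∘ F⁻¹ : (0,1)^d → ℝ^d as above. Let f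 : ℝ^d → ℝ have continuous partial derivatives ∂^λ f for all multi-indices λ with |λ| ≤ d and satisfy: for every multi-index λ with |λ| ≤ d and every B > 0 there exists C > 0 with |∂^λ f(x)| ≤ C · ∏_{j=1}^d min(F(x_j), 1-F(x_j))^{-B} for all x ∈ ℝ^d. Then for every multi-index λ with |λ| ≤ d and every B > 0 there exists C > 0 such that |∂^λ f(τ(u))| ≤ C · ∏_{j=1}^d min(u_j, 1-u_j)^{-B} for all u ∈ (0,1)^d. -/
/-!
Both the growth of `f` and the action of `τ` are measured by the product weight
`W x = ∏ j, min (F (x j)) (1 - F (x j)) ^ (-1) ≥ 1`. By symmetry and monotonicity of `F` the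
one-dimensional weight is `z ↦ (F (-|z|))⁻¹`, which increases with `|z|`. As a row of `ℓ¹`-norm at
most one satisfies `|(L x)_i| ≤ max_j |x_j|`, the mixing step costs at most one factor `W x`, and
the growth condition on `T_i` costs a fixed power. Hence `W ∘ τ` is bounded by a multiple of a power
of `W`, and growth slower than every positive power of `W` survives composition with `τ`.
-/

open Filter Asymptotics

/-- `V` is bounded by a constant multiple of some positive power of `W`. This is the relation
between weights that transport maps have to respect; with the filter `⊤` the bound is uniform. -/
def PolyDominated {α : Type*} (V W : α → ℝ) : Prop :=
  ∃ A : ℝ, 0 < A ∧ V =O[⊤] fun x => W x ^ A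

/-- `g` is bounded by a constant multiple of every positive power of the weight `W`, with a constant
depending on the power. -/
def SubpolynomialGrowth {α E : Type*} [Norm E] (g : α → E) (W : α → ℝ) : Prop :=
  ∀ B : ℝ, 0 < B → g =O[⊤] fun x => W x ^ B

namespace PolyDominated

variable {α β : Type*} {U V W : α → ℝ}

theorem of_le (hV : ∀ x, 0 ≤ V x) (hVW : ∀ x, V x ≤ W x) : PolyDominated V W :=
  ⟨1, one_pos, by simpa only [Real.rpow_one] using isBigO_of_le ⊤ fun x =>
    (Real.norm_of_nonneg (hV x)).trans_le ((hVW x).trans (Real.le_norm_self _))⟩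

theorem trans (hW : ∀ x, 0 ≤ W x) (hUV : PolyDominated U V) (hVW : PolyDominated V W) :
    PolyDominated U W := by
  obtain ⟨A, hA, hUV⟩ := hUV
  obtain ⟨A', hA', hVW⟩ := hVW
  refine ⟨A' * A, mul_pos hA' hA, hUV.trans ?_⟩
  simpa only [Real.rpow_mul (hW _)] using
    hVW.rpow hA.le (Eventually.of_forall fun x => Real.rpow_nonneg (hW x) A')

theorem comp (h : PolyDominated V W) (φ : β → α) : PolyDominated (V ∘ φ) (W ∘ φ) :=
  h.imp fun _ ⟨hA, hVW⟩ => ⟨hA, hVW.comp_tendsto tendsto_top⟩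

theorem mul (hW : ∀ x, 0 < W x) (hU : PolyDominated U W) (hV : PolyDominated V W) :
    PolyDominated (fun x => U x * V x) W := by
  obtain ⟨A, hA, hU⟩ := hU
  obtain ⟨A', hA', hV⟩ := hV
  exact ⟨A + A', add_pos hA hA', by simpa only [Real.rpow_add (hW _)] using hU.mul hV⟩

theorem finsetProd {ι : Type*} {V : ι → α → ℝ} (hW : ∀ x, 1 ≤ W x) (s : Finset ι)
    (hV : ∀ i ∈ s, PolyDominated (V i) W) : PolyDominated (fun x => ∏ i ∈ s, V i x) W := by
  induction s using Finset.cons_induction with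
  | empty => simpa only [Finset.prod_empty] using of_le (fun _ => zero_le_one) hW
  | cons i s _ ih =>
    simp only [Finset.prod_cons]
    exact mul (fun x => one_pos.trans_le (hW x)) (hV i (Finset.mem_cons_self i s))
      (ih fun j hj => hV j (Finset.mem_cons_of_mem hj))

theorem foldl {κ : Type*} {φ : κ → α → α} (hW : ∀ x, 0 ≤ W x)
    (hφ : ∀ k, PolyDominated (W ∘ φ k) W) (l : List κ) :
    PolyDominated (fun x => W (l.foldl (fun y k => φ k y) x)) W := by
  induction l with
  | nil => exact of_le hW fun _ => le_rfl
  | cons k l ih => exact (ih.comp (φ k)).trans hW (hφ k)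

end PolyDominated

namespace SubpolynomialGrowth

variable {α β E : Type*} [Norm E] {g : α → E}

theorem iff_exists_pos {W : α → ℝ} (hW : ∀ x, 0 ≤ W x) :
    SubpolynomialGrowth g W ↔ ∀ B : ℝ, 0 < B → ∃ C : ℝ, 0 < C ∧ ∀ x, ‖g x‖ ≤ C * W x ^ B := by
  simp only [SubpolynomialGrowth, isBigO_iff', eventually_top,
    Real.norm_of_nonneg (Real.rpow_nonneg (hW _) _)]

theorem comp {V : α → ℝ} {W : β → ℝ} {φ : β → α} (hg : SubpolynomialGrowth g V)
    (hW : ∀ x, 0 ≤ W x) (hφ : PolyDominated (V ∘ φ) W) : SubpolynomialGrowth (g ∘ φ) W := by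
  intro B hB
  obtain ⟨A, hA, hφ⟩ := hφ
  have hpow : (fun x => V (φ x) ^ (B / A)) =O[⊤] fun x => (W x ^ A) ^ (B / A) :=
    hφ.rpow (div_pos hB hA).le (Eventually.of_forall fun x => Real.rpow_nonneg (hW x) A)
  simp only [← Real.rpow_mul (hW _), mul_div_cancel₀ B hA.ne'] at hpow
  exact ((hg (B / A) (div_pos hB hA)).comp_tendsto tendsto_top).trans hpow

end SubpolynomialGrowth

section AutoregressiveLayer

variable {ι : Type*} [Fintype ι]

theorem exists_abs_dotProduct_le_abs [Nonempty ι] {a : ι → ℝ} (ha : ∑ j, |a j| ≤ 1) (x : ι → ℝ) :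
    ∃ j, |a ⬝ᵥ x| ≤ |x j| := by
  obtain ⟨m, hm⟩ := Finite.exists_max fun j => |x j|
  refine ⟨m, ?_⟩
  calc |a ⬝ᵥ x| ≤ ∑ j, |a j * x j| := Finset.abs_sum_le_sum_abs _ _
    _ ≤ ∑ j, |a j| * |x m| := Finset.sum_le_sum fun j _ => by
        rw [abs_mul]
        exact mul_le_mul_of_nonneg_left (hm j) (abs_nonneg _)
    _ = (∑ j, |a j|) * |x m| := (Finset.sum_mul ..).symm
    _ ≤ |x m| := mul_le_of_le_one_left (abs_nonneg _) ha

variable {G : ℝ → ℝ} (hG_one : ∀ z, 1 ≤ G z) (hG_mono : ∀ a b, |a| ≤ |b| → G a ≤ G b)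
include hG_one hG_mono

theorem apply_dotProduct_le_prod [Nonempty ι] {a : ι → ℝ} (ha : ∑ j, |a j| ≤ 1) (x : ι → ℝ) :
    G (a ⬝ᵥ x) ≤ ∏ j, G (x j) := by
  obtain ⟨m, hm⟩ := exists_abs_dotProduct_le_abs ha x
  calc G (a ⬝ᵥ x) ≤ G (x m) := hG_mono _ _ hm
    _ ≤ ∏ j, G (x j) := by
      simpa only [max_eq_left (hG_one _)] using
        Finset.le_prod_max_one (Finset.mem_univ m) fun j => G (x j)

theorem PolyDominated.prod_layer {L : Matrix ι ι ℝ} {T : ι → ℝ → ℝ}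
    (hL : ∀ i, ∑ j, |L i j| ≤ 1) (hT : ∀ i, PolyDominated (G ∘ T i) G) :
    PolyDominated (fun x : ι → ℝ => ∏ i, G (T i (L.mulVec x i))) fun x => ∏ i, G (x i) := by
  have hW_one : ∀ x : ι → ℝ, 1 ≤ ∏ i, G (x i) := fun x => Finset.one_le_prod fun i _ => hG_one _
  refine finsetProd hW_one Finset.univ fun i _ => ?_
  have hmix : PolyDominated (fun x : ι → ℝ => G (L.mulVec x i)) fun x => ∏ j, G (x j) :=
    have : Nonempty ι := ⟨i⟩
    of_le (fun _ => zero_le_one.trans (hG_one _)) (apply_dotProduct_le_prod hG_one hG_mono (hL i))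
  exact ((hT i).comp fun x => L.mulVec x i).trans (fun x => zero_le_one.trans (hW_one x)) hmix

theorem PolyDominated.prod_applyLayers {d K : ℕ} {L : Fin K → Matrix (Fin d) (Fin d) ℝ}
    {T : Fin K → Fin d → ℝ → ℝ} (hL : ∀ k i, ∑ j, |L k i j| ≤ 1)
    (hT : ∀ k i, PolyDominated (G ∘ T k i) G) :
    PolyDominated (fun x => ∏ i, G (applyLayers L T x i)) fun x => ∏ i, G (x i) :=
  foldl (W := fun x : Fin d → ℝ => ∏ i, G (x i))
    (fun _ => Finset.prod_nonneg fun _ _ => zero_le_one.trans (hG_one _))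
    (fun k => prod_layer hG_one hG_mono (hL k) (hT k)) (List.finRange K)

end AutoregressiveLayer

/-- The weight `min (F z) (1 - F z) ^ (-1)` of a distribution function `F`, which blows up in both
tails. -/
noncomputable def tailWeight (F : ℝ → ℝ) (z : ℝ) : ℝ :=
  (min (F z) (1 - F z))⁻¹

section TailWeight

variable {F : ℝ → ℝ} (hFpos : ∀ z, 0 < F z) (hFsym : ∀ z, F z + F (-z) = 1)

include hFsym in
theorem tailWeight_eq_inv_apply_neg_abs (hFmono : Monotone F) (z : ℝ) :
    tailWeight F z = (F (-|z|))⁻¹ := by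
  rw [tailWeight, ← eq_sub_of_add_eq' (hFsym z), ← hFmono.map_min, abs, neg_sup, neg_neg, min_comm]

include hFpos hFsym

theorem min_apply_one_sub_apply_pos (z : ℝ) : 0 < min (F z) (1 - F z) :=
  lt_min (hFpos z) (eq_sub_of_add_eq' (hFsym z) ▸ hFpos (-z))

theorem one_le_tailWeight (z : ℝ) : 1 ≤ tailWeight F z :=
  (one_le_inv₀ (min_apply_one_sub_apply_pos hFpos hFsym z)).2 <|
    (min_le_left _ _).trans (by linarith [hFsym z, hFpos (-z)])

theorem tailWeight_nonneg (z : ℝ) : 0 ≤ tailWeight F z :=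
  zero_le_one.trans (one_le_tailWeight hFpos hFsym z)

theorem tailWeight_le_of_abs_le (hFmono : Monotone F) (a b : ℝ) (hab : |a| ≤ |b|) :
    tailWeight F a ≤ tailWeight F b := by
  simpa only [tailWeight_eq_inv_apply_neg_abs hFsym hFmono] using
    inv_anti₀ (hFpos _) (hFmono (neg_le_neg hab))

theorem tailWeight_rpow (z B : ℝ) : tailWeight F z ^ B = min (F z) (1 - F z) ^ (-B) := by
  have hmin := (min_apply_one_sub_apply_pos hFpos hFsym z).le
  rw [tailWeight, Real.inv_rpow hmin, Real.rpow_neg hmin]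

theorem polyDominated_tailWeight_comp {S : ℝ → ℝ} {B C : ℝ} (hB : 0 < B)
    (hS : ∀ z, (min (F (S z)) (1 - F (S z)))⁻¹ ≤ C * min (F z) (1 - F z) ^ (-B)) :
    PolyDominated (tailWeight F ∘ S) (tailWeight F) := by
  have hnonneg := tailWeight_nonneg hFpos hFsym
  refine ⟨B, hB, isBigO_top.2 ⟨C, fun z => ?_⟩⟩
  rw [Function.comp_apply, Real.norm_of_nonneg (hnonneg _),
    Real.norm_of_nonneg (Real.rpow_nonneg (hnonneg z) B), tailWeight_rpow hFpos hFsym]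
  exact hS z

theorem subpolynomialGrowth_prod_tailWeight_iff {ι E : Type*} [Fintype ι] [Norm E]
    {g : (ι → ℝ) → E} :
    SubpolynomialGrowth g (fun x => ∏ j, tailWeight F (x j)) ↔
      ∀ B : ℝ, 0 < B → ∃ C : ℝ, 0 < C ∧
        ∀ x, ‖g x‖ ≤ C * ∏ j, min (F (x j)) (1 - F (x j)) ^ (-B) := by
  have hnonneg := tailWeight_nonneg hFpos hFsym
  rw [SubpolynomialGrowth.iff_exists_pos fun x => Finset.prod_nonneg fun j _ => hnonneg (x j)]
  simp only [← tailWeight_rpow hFpos hFsym, Real.finsetProd_rpow _ _ fun _ _ => hnonneg _]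

end TailWeight

theorem stmt_14_general {d K : ℕ} {E : Type*} [Norm E] {F Finv : ℝ → ℝ}
    (hFpos : ∀ x, 0 < F x) (hFmono : Monotone F) (hFsym : ∀ x, F x + F (-x) = 1)
    (hFinv : ∀ u ∈ Set.Ioo (0 : ℝ) 1, F (Finv u) = u)
    {L : Fin K → Matrix (Fin d) (Fin d) ℝ} (hLrow : ∀ k i, ∑ j, |L k i j| ≤ 1)
    {T : Fin K → Fin d → ℝ → ℝ}
    (hTgrowth : ∀ k j, ∃ B C : ℝ, 0 < B ∧ ∀ z,
      (min (F (T k j z)) (1 - F (T k j z)))⁻¹ ≤ C * min (F z) (1 - F z) ^ (-B))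
    {g : (Fin d → ℝ) → E}
    (hg : ∀ B : ℝ, 0 < B → ∃ C : ℝ, 0 < C ∧
      ∀ x, ‖g x‖ ≤ C * ∏ j, min (F (x j)) (1 - F (x j)) ^ (-B)) :
    ∀ B : ℝ, 0 < B → ∃ C : ℝ, 0 < C ∧ ∀ u : Fin d → ℝ, (∀ j, u j ∈ Set.Ioo (0 : ℝ) 1) →
      ‖g (applyLayers L T fun l => Finv (u l))‖ ≤ C * ∏ j, min (u j) (1 - u j) ^ (-B) := by
  have hnonneg : ∀ x : Fin d → ℝ, 0 ≤ ∏ j, tailWeight F (x j) :=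
    fun x => Finset.prod_nonneg fun j _ => tailWeight_nonneg hFpos hFsym (x j)
  have hT : ∀ k j, PolyDominated (tailWeight F ∘ T k j) (tailWeight F) := fun k j =>
    let ⟨_, _, hB, hC⟩ := hTgrowth k j
    polyDominated_tailWeight_comp hFpos hFsym hB hC
  have hlayers := PolyDominated.prod_applyLayers (one_le_tailWeight hFpos hFsym)
    (tailWeight_le_of_abs_le hFpos hFsym hFmono) hLrow hT
  have hcomp : SubpolynomialGrowth (g ∘ applyLayers L T) fun x => ∏ j, tailWeight F (x j) :=
    ((subpolynomialGrowth_prod_tailWeight_iff hFpos hFsym).2 hg).comp hnonneg hlayers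
  intro B hB
  obtain ⟨C, hC, hbound⟩ := (subpolynomialGrowth_prod_tailWeight_iff hFpos hFsym).1 hcomp B hB
  refine ⟨C, hC, fun u hu => ?_⟩
  simpa only [Function.comp_apply, hFinv _ (hu _)] using hbound fun l => Finv (u l)

/-- Growth rate of `f` along the transport map: if every `∂^λ f` with `|λ| ≤ d` satisfies
`|∂^λ f(x)| ≤ C ∏_j min(F(x_j), 1-F(x_j))^{-B}` for arbitrarily small `B > 0`, then writing
`z = τ^{1:K}(u)` with `τ^{1:K} = τ^K ∘ ⋯ ∘ τ^1 ∘ F⁻¹`, for arbitrarily small `B > 0` one has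
`|∂^λ f(z)| ≤ C ∏_j min(u_j, 1-u_j)^{-B}` on `(0,1)^d`. -/
theorem stmt_14 (d K : ℕ) (hd : 1 ≤ d)
    (F Finv : ℝ → ℝ)
    (hFrange : ∀ x : ℝ, F x ∈ Set.Ioo (0:ℝ) 1)
    (hFmono : StrictMono F)
    (hFdiff : Differentiable ℝ F)
    (hFsurj : ∀ y ∈ Set.Ioo (0:ℝ) 1, ∃ x, F x = y)
    (hFconc : ConcaveOn ℝ Set.univ fun x : ℝ => Real.log (F x))
    (hFsym : ∀ x : ℝ, F x + F (-x) = 1)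
    (hFinv : ∀ u ∈ Set.Ioo (0:ℝ) 1, F (Finv u) = u)
    (L : Fin K → Matrix (Fin d) (Fin d) ℝ)
    (hLtri : ∀ k, ∀ i j : Fin d, i < j → L k i j = 0)
    (hLdiag : ∀ k i, 0 < L k i i)
    (hLrow : ∀ k i, ∑ j, |L k i j| = 1)
    (T Tinv : Fin K → Fin d → ℝ → ℝ)
    (hTmono : ∀ k j, StrictMono (T k j))
    (hTbij : ∀ k j, Function.Bijective (T k j))
    (hTinv : ∀ k j, Function.RightInverse (Tinv k j) (T k j))
    (B₁ C₁ : ℝ) (hB₁ : 0 < B₁) (hC₁ : 0 < C₁)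
    (hTgrowth : ∀ k j (z : ℝ), (min (F z) (1 - F z))⁻¹ ≤
      C₁ * (min (F (Tinv k j z)) (1 - F (Tinv k j z))) ^ (-B₁))
    (f : (Fin d → ℝ) → ℝ)
    (hfsmooth : ContDiff ℝ d f)
    (hf : ∀ lam : Fin d → ℕ, (∑ j, lam j) ≤ d → ∀ B : ℝ, 0 < B → ∃ C : ℝ, 0 < C ∧
      ∀ x : Fin d → ℝ, |partialDMulti lam f x| ≤
        C * ∏ j, (min (F (x j)) (1 - F (x j))) ^ (-B)) :
    ∀ lam : Fin d → ℕ, (∑ j, lam j) ≤ d → ∀ B : ℝ, 0 < B → ∃ C : ℝ, 0 < C ∧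
      ∀ u : Fin d → ℝ, (∀ j, u j ∈ Set.Ioo (0:ℝ) 1) →
      |partialDMulti lam f (applyLayers L T (fun l => Finv (u l)))| ≤
        C * ∏ j, (min (u j) (1 - u j)) ^ (-B) := by
  have hTleft : ∀ k j, Function.LeftInverse (Tinv k j) (T k j) := fun k j =>
    (hTinv k j).rightInverse_of_injective (hTbij k j).injective
  exact fun lam hlam => stmt_14_general (g := partialDMulti lam f)
    (fun x => (hFrange x).1) hFmono.monotone hFsym hFinv (fun k i => (hLrow k i).le)
    (fun k j => ⟨B₁, C₁, hB₁, fun z => by simpa only [hTleft k j z] using hTgrowth k j (T k j z)⟩)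
    (hf lam hlam)
end
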